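/- arXiv:2507.10170 — 4 statements merged into one kernel-verified Lean document; each statement's English description precedes it below -/
import Mathlib

section
/- Let N be a positive integer, I R : Fin N → ℕ families of positive integers, and suppose a tensor X : (∀ n : Fin N, Fin (I n)) → ℝ admits a Tucker decomposition with core G : (∀ n : Fin N, Fin (R n)) → ℝ and factor matrices A n : Fin (I n) → Fin (R n) → ℝ, i.e., X i = ∑_{r : ∀ n, Fin (R n)} G r * ∏_{n : Fin N} A n (i n) (r n). Then for every mode k : Fin N, the mode-k unfolding of X (the generalized unfolding along the singleton subset {k}) has matrix rank at most R k. -/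
/-- The generalized unfolding of a tensor `X` along a subset `S` of its modes:
rows are indexed by the multi-indices of the modes in `S`, columns by the
multi-indices of the remaining modes. -/
def unfolding {N : ℕ} (I : Fin N → ℕ) (S : Finset (Fin N))
    (X : (∀ n : Fin N, Fin (I n)) → ℝ) :
    Matrix ((n : {m : Fin N // m ∈ S}) → Fin (I n.val))
           ((n : {m : Fin N // m ∉ S}) → Fin (I n.val)) ℝ :=
  Matrix.of fun r c =>
    X (fun n => if h : n ∈ S then r ⟨n, h⟩ else c ⟨n, h⟩)

/-!
Grouping the modes in `S` against the remaining ones turns a Tucker decomposition into the matrix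
factorization `X_S = (⨂_{n ∈ S} A n) * G_S * (⨂_{n ∉ S} A n)ᵀ`, so the unfolding `X_S` has rank at
most that of the core unfolding `G_S`, which has only `∏_{n ∈ S} R n` rows.
-/

section PiKronecker

variable {ι M : Type*} [Fintype ι] [CommMonoid M] {α β : ι → Type*}

/-- The Kronecker product of a finite family of matrices, with rows and columns indexed by
multi-indices. The tensor with Tucker core `G` and factor matrices `A` is `piKronecker A *ᵥ G`. -/
def piKronecker (A : ∀ i, Matrix (α i) (β i) M) :
    Matrix (∀ i, α i) (∀ i, β i) M :=
  Matrix.of fun a b => ∏ i, A i (a i) (b i)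

-- The subtype instances are arguments because for `p = (· ∈ S)` with `S : Finset ι` the instance
-- found is that of `↥S`, not `Subtype.fintype p`.
theorem piKronecker_piEquivPiSubtypeProd_symm (p : ι → Prop) [DecidablePred p]
    [Fintype {i // p i}] [Fintype {i // ¬p i}] (A : ∀ i, Matrix (α i) (β i) M)
    (a : ∀ i : {i // p i}, α i) (a' : ∀ i : {i // ¬p i}, α i)
    (b : ∀ i : {i // p i}, β i) (b' : ∀ i : {i // ¬p i}, β i) :
    piKronecker A ((Equiv.piEquivPiSubtypeProd p α).symm (a, a'))
        ((Equiv.piEquivPiSubtypeProd p β).symm (b, b')) =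
      piKronecker (fun i : {i // p i} => A i) a b *
        piKronecker (fun i : {i // ¬p i} => A i) a' b' := by
  simp only [piKronecker, Matrix.of_apply]
  rw [← Fintype.prod_subtype_mul_prod_subtype p]
  congr! 3 with i _ i _
  all_goals simp [i.2]

end PiKronecker

section Unfolding

open Matrix

variable {N : ℕ} {I R : Fin N → ℕ}

theorem unfolding_apply (S : Finset (Fin N)) (X : (∀ n, Fin (I n)) → ℝ)
    (a : ∀ n : {n // n ∈ S}, Fin (I n)) (b : ∀ n : {n // n ∉ S}, Fin (I n)) :
    unfolding I S X a b =
      X ((Equiv.piEquivPiSubtypeProd (· ∈ S) fun n => Fin (I n)).symm (a, b)) :=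
  rfl

theorem unfolding_piKronecker_mulVec (A : ∀ n, Matrix (Fin (I n)) (Fin (R n)) ℝ)
    (G : (∀ n, Fin (R n)) → ℝ) (S : Finset (Fin N)) :
    unfolding I S (piKronecker A *ᵥ G) =
      piKronecker (fun n : {n // n ∈ S} => A n) * unfolding R S G *
        (piKronecker fun n : {n // n ∉ S} => A n)ᵀ := by
  ext a b
  let split := Equiv.piEquivPiSubtypeProd (· ∈ S) fun n => Fin (R n)
  calc unfolding I S (piKronecker A *ᵥ G) a b
    _ = ∑ s, ∑ t, piKronecker A
          ((Equiv.piEquivPiSubtypeProd (· ∈ S) fun n => Fin (I n)).symm (a, b))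
          (split.symm (s, t)) * G (split.symm (s, t)) := by
      rw [unfolding_apply, mulVec, dotProduct, ← split.symm.sum_comp, Fintype.sum_prod_type]
    _ = ∑ s, ∑ t, piKronecker (fun n : {n // n ∈ S} => A n) a s * unfolding R S G s t *
          piKronecker (fun n : {n // n ∉ S} => A n) b t := by
      refine Fintype.sum_congr _ _ fun s => Fintype.sum_congr _ _ fun t => ?_
      rw [piKronecker_piEquivPiSubtypeProd_symm, unfolding_apply, mul_right_comm]
    _ = _ := by
      simp only [mul_apply, transpose_apply, Finset.sum_mul]
      exact Finset.sum_comm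

theorem rank_unfolding_piKronecker_mulVec_le (A : ∀ n, Matrix (Fin (I n)) (Fin (R n)) ℝ)
    (G : (∀ n, Fin (R n)) → ℝ) (S : Finset (Fin N)) :
    (unfolding I S (piKronecker A *ᵥ G)).rank ≤ (unfolding R S G).rank := by
  rw [unfolding_piKronecker_mulVec]
  exact (rank_mul_le_left _ _).trans (rank_mul_le_right _ _)

theorem rank_unfolding_le_prod (X : (∀ n, Fin (I n)) → ℝ) (S : Finset (Fin N)) :
    (unfolding I S X).rank ≤ ∏ n ∈ S, I n := by
  calc (unfolding I S X).rank
    _ ≤ Fintype.card (∀ n : {n // n ∈ S}, Fin (I n)) := rank_le_card_height _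
    _ = ∏ n ∈ S, I n := by
      simp only [Fintype.card_pi, Fintype.card_fin, Finset.univ_eq_attach, Finset.prod_attach S I]

theorem tucker_mode_unfolding_rank_le_general (X : (∀ n, Fin (I n)) → ℝ)
    (G : (∀ n, Fin (R n)) → ℝ) (A : ∀ n, Fin (I n) → Fin (R n) → ℝ)
    (hX : ∀ i, X i = ∑ r, G r * ∏ n, A n (i n) (r n)) (S : Finset (Fin N)) :
    (unfolding I S X).rank ≤ ∏ n ∈ S, R n := by
  have hX_mulVec : X = piKronecker (fun n => Matrix.of (A n)) *ᵥ G := by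
    ext i
    simp only [hX, mulVec, dotProduct, piKronecker, of_apply, mul_comm]
  rw [hX_mulVec]
  exact (rank_unfolding_piKronecker_mulVec_le _ G S).trans (rank_unfolding_le_prod G S)

end Unfolding

/-- If an order-`N` tensor admits a Tucker decomposition with Tucker ranks
`(R 0, …, R (N-1))`, then its mode-`k` unfolding has matrix rank at most `R k`. -/
theorem tucker_mode_unfolding_rank_le
    (N : ℕ) (hN : 0 < N)
    (I R : Fin N → ℕ) (hI : ∀ n : Fin N, 0 < I n) (hR : ∀ n : Fin N, 0 < R n)
    (X : (∀ n : Fin N, Fin (I n)) → ℝ)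
    (G : (∀ n : Fin N, Fin (R n)) → ℝ)
    (A : ∀ n : Fin N, Fin (I n) → Fin (R n) → ℝ)
    (hX : ∀ i : ∀ n : Fin N, Fin (I n),
      X i = ∑ r : ∀ n : Fin N, Fin (R n), G r * ∏ n : Fin N, A n (i n) (r n))
    (k : Fin N) :
    (unfolding I ({k} : Finset (Fin N)) X).rank ≤ R k := by
  simpa only [Finset.prod_singleton] using tucker_mode_unfolding_rank_le_general X G A hX {k}
end

section
/- Let N be a positive integer, I : Fin N → ℕ positive mode sizes, and let R : Fin (N+1) → ℕ be positive integers with R 0 = 1 and R N = 1. Suppose a tensor X : (∀ n : Fin N, Fin (I n)) → ℝ admits a Tensor Train (TT) decomposition with cores G n : Fin (I n) → Matrix (Fin (R n)) (Fin (R (n+1))) ℝ, i.e., X i equals the unique entry of the matrix product (G 0 (i 0)) * (G 1 (i 1)) * ⋯ * (G (N-1) (i (N-1))). Then for every d with 1 ≤ d ≤ N-1, the generalized unfolding of X along the set of modes {0, 1, …, d-1} has matrix rank at most R d. -/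
/-!
Cut every rank path `r` at position `d`. It is the same thing as a path up to `d` together with a
path from `d` on that agree at `d`, and the product of core entries along `r` splits accordingly.
Grouping the path sum by the common value `r d` therefore factors the unfolding along the first `d`
modes through the index set of `r d`, which has `R d` elements.
-/

section PathSum

variable {ι : Type*} [LinearOrder ι] [Fintype ι] {β : ι → Type*} [∀ j, Fintype (β j)]
  {K : Type*} [NonUnitalNonAssocSemiring K]

theorem sum_filter_mul_sum_filter_eq_sum_pi (d : ι) [DecidableEq (β d)] (k : β d)
    (f : (∀ j : {j // j ≤ d}, β j) → K) (g : (∀ j : {j // d ≤ j}, β j) → K) :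
    (∑ a with a ⟨d, le_rfl⟩ = k, f a) * (∑ b with b ⟨d, le_rfl⟩ = k, g b) =
      ∑ r : ∀ j, β j with r d = k, f (fun j => r j) * g (fun j => r j) := by
  rw [Finset.sum_mul_sum, ← Finset.sum_product']
  symm
  refine Finset.sum_nbij' (fun r => (fun j => r j, fun j => r j))
    (fun p j => if h : j ≤ d then p.1 ⟨j, h⟩ else p.2 ⟨j, le_of_not_ge h⟩) ?_ ?_ ?_ ?_ ?_
  · simp
  · simp +contextual
  · simp
  · rintro ⟨a, b⟩ hab
    obtain ⟨ha, hb⟩ : a ⟨d, le_rfl⟩ = k ∧ b ⟨d, le_rfl⟩ = k := by simpa using hab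
    ext j
    · simp [j.2]
    · obtain ⟨j, hj⟩ := j
      rcases hj.eq_or_lt with rfl | hlt
      · simp [ha, hb]
      · simp [hlt.not_ge]
  · simp

theorem sum_pi_mul_eq_sum_sum_filter_mul_sum_filter (d : ι) [DecidableEq (β d)]
    (f : (∀ j : {j // j ≤ d}, β j) → K) (g : (∀ j : {j // d ≤ j}, β j) → K) :
    ∑ r : ∀ j, β j, f (fun j => r j) * g (fun j => r j) =
      ∑ k, (∑ a with a ⟨d, le_rfl⟩ = k, f a) * (∑ b with b ⟨d, le_rfl⟩ = k, g b) := by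
  simp_rw [sum_filter_mul_sum_filter_eq_sum_pi]
  exact (Finset.sum_fiberwise Finset.univ (fun r : ∀ j, β j => r d) _).symm

end PathSum

/-- The unfolding of a tensor along a finite set `S` of its modes, for arbitrary mode index types
and entries; for modes `Fin (I n)` and real entries it is `unfolding` by definition. -/
def modeUnfolding {M : Type*} [DecidableEq M] {α : M → Type*} {K : Type*} (S : Finset M)
    (X : (∀ n, α n) → K) :
    Matrix (∀ n : {m // m ∈ S}, α n) (∀ n : {m // m ∉ S}, α n) K :=
  Matrix.of fun row col => X fun n => if h : n ∈ S then row ⟨n, h⟩ else col ⟨n, h⟩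

section ModesBefore

variable {N : ℕ} {d : Fin (N + 1)} {n : Fin N}

/-- The modes `0, …, d - 1` to the left of the bond `d`. Mode `n` joins bonds `n` and `n + 1`,
so there is one bond more than there are modes. -/
def modesBefore (d : Fin (N + 1)) : Finset (Fin N) :=
  {n | n.castSucc < d}

theorem mem_modesBefore : n ∈ modesBefore d ↔ n.castSucc < d := by
  simp [modesBefore]

theorem mem_modesBefore_iff_succ_le : n ∈ modesBefore d ↔ n.succ ≤ d :=
  mem_modesBefore.trans Fin.castSucc_lt_iff_succ_le

theorem notMem_modesBefore : n ∉ modesBefore d ↔ d ≤ n.castSucc :=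
  mem_modesBefore.not.trans not_lt

theorem le_succ_of_notMem_modesBefore (h : n ∉ modesBefore d) : d ≤ n.succ :=
  (notMem_modesBefore.1 h).trans n.castSucc_lt_succ.le

end ModesBefore

section TensorTrain

variable {N : ℕ} {α : Fin N → Type*} {β : Fin (N + 1) → Type*} [∀ j, Fintype (β j)]
  {K : Type*} [CommSemiring K]

/-- The tensor represented by the tensor train with cores `G`, as the sum over all rank paths. The
two boundary bonds are summed over like the inner ones. -/
def ttTensor (G : ∀ n, α n → Matrix (β n.castSucc) (β n.succ) K) (i : ∀ n, α n) : K :=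
  ∑ r : ∀ j, β j, ∏ n, G n (i n) (r n.castSucc) (r n.succ)

/-- The partial contraction of the cores to the left of the bond `d`, as a matrix whose columns
are the index values of that bond. -/
def ttHead (G : ∀ n, α n → Matrix (β n.castSucc) (β n.succ) K) (d : Fin (N + 1))
    [DecidableEq (β d)] : Matrix (∀ n : {m // m ∈ modesBefore d}, α n) (β d) K :=
  Matrix.of fun row k => ∑ a : (∀ j : {j // j ≤ d}, β j) with a ⟨d, le_rfl⟩ = k,
    ∏ n : {m // m ∈ modesBefore d}, G n (row n)
      (a ⟨n.1.castSucc, (mem_modesBefore.1 n.2).le⟩)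
      (a ⟨n.1.succ, mem_modesBefore_iff_succ_le.1 n.2⟩)

/-- The partial contraction of the cores to the right of the bond `d`, as a matrix whose rows
are the index values of that bond. -/
def ttTail (G : ∀ n, α n → Matrix (β n.castSucc) (β n.succ) K) (d : Fin (N + 1))
    [DecidableEq (β d)] : Matrix (β d) (∀ n : {m // m ∉ modesBefore d}, α n) K :=
  Matrix.of fun k col => ∑ b : (∀ j : {j // d ≤ j}, β j) with b ⟨d, le_rfl⟩ = k,
    ∏ n : {m // m ∉ modesBefore d}, G n (col n)
      (b ⟨n.1.castSucc, notMem_modesBefore.1 n.2⟩)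
      (b ⟨n.1.succ, le_succ_of_notMem_modesBefore n.2⟩)

theorem modeUnfolding_ttTensor (G : ∀ n, α n → Matrix (β n.castSucc) (β n.succ) K)
    (d : Fin (N + 1)) [DecidableEq (β d)] :
    modeUnfolding (modesBefore d) (ttTensor G) = ttHead G d * ttTail G d := by
  ext row col
  simp only [Matrix.mul_apply, ttHead, ttTail, Matrix.of_apply, modeUnfolding, ttTensor]
  rw [← sum_pi_mul_eq_sum_sum_filter_mul_sum_filter]
  refine Finset.sum_congr rfl fun r _ => ?_
  rw [← Fintype.prod_subtype_mul_prod_subtype (· ∈ modesBefore d)]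
  congr 1
  -- The two sides carry different `Fintype` instances on the subtype of `modesBefore d`.
  · exact Finset.prod_congr (by ext; simp) fun n _ => by rw [dif_pos n.2]
  · exact Fintype.prod_congr _ _ fun n => by rw [dif_neg n.2]

end TensorTrain

theorem tt_unfolding_rank_le_general {N : ℕ} {α : Fin N → Type*} [∀ n, Fintype (α n)]
    {β : Fin (N + 1) → Type*} [∀ j, Fintype (β j)] {K : Type*}
    [CommSemiring K] [StrongRankCondition K]
    (G : ∀ n, α n → Matrix (β n.castSucc) (β n.succ) K) (d : Fin (N + 1)) :
    (modeUnfolding (modesBefore d) (ttTensor G)).rank ≤ Fintype.card (β d) := by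
  classical
  rw [modeUnfolding_ttTensor]
  exact (Matrix.rank_mul_le_left _ _).trans (Matrix.rank_le_card_width _)

/-- Tensor Train rank bound: if an order-`N` tensor admits a TT decomposition
with cores `G n` of size `R n × R (n+1)` and boundary ranks `R 0 = R N = 1`
(so that each entry of the tensor is the unique entry of the corresponding
`1 × 1` chain matrix product, i.e. the sum over all rank paths of the products
of core entries), then for every `1 ≤ d ≤ N - 1` the generalized unfolding
along the first `d` modes `{0, 1, …, d-1}` has matrix rank at most `R d`. -/
theorem tt_unfolding_rank_le
    (N : ℕ) (hN : 0 < N)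
    (I : Fin N → ℕ) (hI : ∀ n : Fin N, 0 < I n)
    (R : Fin (N + 1) → ℕ) (hR : ∀ n : Fin (N + 1), 0 < R n)
    (hR0 : R 0 = 1) (hRN : R (Fin.last N) = 1)
    (X : (∀ n : Fin N, Fin (I n)) → ℝ)
    (G : ∀ n : Fin N, Fin (I n) → Matrix (Fin (R n.castSucc)) (Fin (R n.succ)) ℝ)
    (hX : ∀ i : ∀ n : Fin N, Fin (I n),
      X i = ∑ r : ∀ n : Fin (N + 1), Fin (R n),
        ∏ n : Fin N, G n (i n) (r n.castSucc) (r n.succ))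
    (d : ℕ) (hd1 : 1 ≤ d) (hd2 : d ≤ N - 1) :
    (unfolding I (Finset.univ.filter (fun n : Fin N => n.val < d)) X).rank ≤
      R ⟨d, by omega⟩ := by
  obtain rfl : X = ttTensor (β := fun j => Fin (R j)) G := funext hX
  exact (tt_unfolding_rank_le_general (β := fun j => Fin (R j)) G ⟨d, by omega⟩).trans_eq
    (Fintype.card_fin _)
end

section
/- Let I₁, I₂, I₃, I₄ and R₁, R₂, R₃ be positive integers, and suppose a tensor X : Fin I₁ × Fin I₂ × Fin I₃ × Fin I₄ → ℝ admits an order-4 Tensor Train decomposition X (i₁,i₂,i₃,i₄) = ∑_{r₁ : Fin R₁} ∑_{r₂ : Fin R₂} ∑_{r₃ : Fin R₃} A i₁ r₁ * B r₁ i₂ r₂ * C r₂ i₃ r₃ * D r₃ i₄, for cores A : Fin I₁ → Fin R₁ → ℝ, B : Fin R₁ → Fin I₂ → Fin R₂ → ℝ, C : Fin R₂ → Fin I₃ → Fin R₃ → ℝ, D : Fin R₃ → Fin I₄ → ℝ. Then the matrix with rows indexed by Fin I₁ × Fin I₃, columns indexed by Fin I₂ × Fin I₄, and entry at ((i₁,i₃),(i₂,i₄))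 equal to X (i₁,i₂,i₃,i₄), has rank at most R₁ * R₂ * R₃. -/
section

variable {S ι₁ ι₂ ι₃ ι₄ ρ₁ ρ₂ ρ₃ : Type*}

theorem matrix_rank_mul_le_card {m n κ : Type*} [Fintype n] [Fintype κ] [CommSemiring S]
    [StrongRankCondition S] (M : Matrix m κ S) (N : Matrix κ n S) :
    (M * N).rank ≤ Fintype.card κ :=
  (M.rank_mul_le_left N).trans M.rank_le_card_width

/-- The interleaved unfolding of a fourth-order tensor: the matrix whose rows are indexed by modes
`1, 3` and whose columns are indexed by modes `2, 4`. -/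
def interleavedUnfolding (X : ι₁ × ι₂ × ι₃ × ι₄ → S) : Matrix (ι₁ × ι₃) (ι₂ × ι₄) S :=
  Matrix.of fun p q => X (p.1, q.1, p.2, q.2)

/-- The first and third tensor train cores, on one side of the cut, as a matrix from the values of
the three cut edges to modes `1, 3`. No edge joins these two cores, so nothing is contracted. -/
def oddCoreMatrix [Mul S] (A : ι₁ → ρ₁ → S) (C : ρ₂ → ι₃ → ρ₃ → S) :
    Matrix (ι₁ × ι₃) (ρ₁ × ρ₂ × ρ₃) S :=
  Matrix.of fun p r => A p.1 r.1 * C r.2.1 p.2 r.2.2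

/-- The second and fourth tensor train cores, on the other side of the cut, as a matrix from
modes `2, 4` to the values of the three cut edges. -/
def evenCoreMatrix [Mul S] (B : ρ₁ → ι₂ → ρ₂ → S) (D : ρ₃ → ι₄ → S) :
    Matrix (ρ₁ × ρ₂ × ρ₃) (ι₂ × ι₄) S :=
  Matrix.of fun r q => B r.1 q.1 r.2.1 * D r.2.2 q.2

variable [Fintype ρ₁] [Fintype ρ₂] [Fintype ρ₃] [CommSemiring S]
  {X : ι₁ × ι₂ × ι₃ × ι₄ → S} {A : ι₁ → ρ₁ → S} {B : ρ₁ → ι₂ → ρ₂ → S}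
  {C : ρ₂ → ι₃ → ρ₃ → S} {D : ρ₃ → ι₄ → S}

theorem interleavedUnfolding_eq_oddCoreMatrix_mul_evenCoreMatrix
    (hX : ∀ i₁ i₂ i₃ i₄, X (i₁, i₂, i₃, i₄) =
      ∑ r₁, ∑ r₂, ∑ r₃, A i₁ r₁ * B r₁ i₂ r₂ * C r₂ i₃ r₃ * D r₃ i₄) :
    interleavedUnfolding X = oddCoreMatrix A C * evenCoreMatrix B D := by
  ext ⟨i₁, i₃⟩ ⟨i₂, i₄⟩
  calc X (i₁, i₂, i₃, i₄)
      = ∑ r₁, ∑ r₂, ∑ r₃, A i₁ r₁ * B r₁ i₂ r₂ * C r₂ i₃ r₃ * D r₃ i₄ := hX i₁ i₂ i₃ i₄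
    _ = ∑ r₁, ∑ r₂, ∑ r₃, A i₁ r₁ * C r₂ i₃ r₃ * (B r₁ i₂ r₂ * D r₃ i₄) := by
      congr! 3
      ring
    _ = (oddCoreMatrix A C * evenCoreMatrix B D) (i₁, i₃) (i₂, i₄) := by
      simp only [oddCoreMatrix, evenCoreMatrix, Matrix.mul_apply, Matrix.of_apply,
        Fintype.sum_prod_type]

theorem tt4_interleaved_unfolding_rank_le_general [Fintype ι₂] [Fintype ι₄]
    [StrongRankCondition S]
    (hX : ∀ i₁ i₂ i₃ i₄, X (i₁, i₂, i₃, i₄) =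
      ∑ r₁, ∑ r₂, ∑ r₃, A i₁ r₁ * B r₁ i₂ r₂ * C r₂ i₃ r₃ * D r₃ i₄) :
    (interleavedUnfolding X).rank ≤ Fintype.card ρ₁ * Fintype.card ρ₂ * Fintype.card ρ₃ :=
  calc (interleavedUnfolding X).rank
      = (oddCoreMatrix A C * evenCoreMatrix B D).rank := by
        rw [interleavedUnfolding_eq_oddCoreMatrix_mul_evenCoreMatrix hX]
    _ ≤ Fintype.card (ρ₁ × ρ₂ × ρ₃) := matrix_rank_mul_le_card _ _
    _ = Fintype.card ρ₁ * Fintype.card ρ₂ * Fintype.card ρ₃ := by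
        simp only [Fintype.card_prod, mul_assoc]

end

/-- Order-4 Tensor Train: the interleaved unfolding pairing modes `{1,3}`
against modes `{2,4}` cuts all three TT edges, so its rank is at most
`R₁ * R₂ * R₃`. -/
theorem tt4_interleaved_unfolding_rank_le
    (I₁ I₂ I₃ I₄ R₁ R₂ R₃ : ℕ)
    (hI₁ : 0 < I₁) (hI₂ : 0 < I₂) (hI₃ : 0 < I₃) (hI₄ : 0 < I₄)
    (hR₁ : 0 < R₁) (hR₂ : 0 < R₂) (hR₃ : 0 < R₃)
    (X : Fin I₁ × Fin I₂ × Fin I₃ × Fin I₄ → ℝ)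
    (A : Fin I₁ → Fin R₁ → ℝ)
    (B : Fin R₁ → Fin I₂ → Fin R₂ → ℝ)
    (C : Fin R₂ → Fin I₃ → Fin R₃ → ℝ)
    (D : Fin R₃ → Fin I₄ → ℝ)
    (hX : ∀ (i₁ : Fin I₁) (i₂ : Fin I₂) (i₃ : Fin I₃) (i₄ : Fin I₄),
      X (i₁, i₂, i₃, i₄) = ∑ r₁ : Fin R₁, ∑ r₂ : Fin R₂, ∑ r₃ : Fin R₃,
        A i₁ r₁ * B r₁ i₂ r₂ * C r₂ i₃ r₃ * D r₃ i₄) :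
    (Matrix.of fun (p : Fin I₁ × Fin I₃) (q : Fin I₂ × Fin I₄) =>
        X (p.1, q.1, p.2, q.2)).rank ≤ R₁ * R₂ * R₃ := by
  simpa only [interleavedUnfolding, Fintype.card_fin] using
    tt4_interleaved_unfolding_rank_le_general hX
end

section
/- Let I₁, I₂, I₃, I₄ and R₁, R₃, R₄ be positive integers, and suppose a tensor X : Fin I₁ × Fin I₂ × Fin I₃ × Fin I₄ → ℝ admits a Flex-Tucker decomposition X (i₁,i₂,i₃,i₄) = ∑_{s : Fin R₁} ∑_{r₃ : Fin R₃} ∑_{r₄ : Fin R₄} V i₁ i₂ s * G s r₃ r₄ * B i₃ r₃ * C i₄ r₄, where V : Fin I₁ → Fin I₂ → Fin R₁ → ℝ, G : Fin R₁ → Fin R₃ → Fin R₄ → ℝ, B : Fin I₃ → Fin R₃ → ℝ, C : Fin I₄ → Fin R₄ → ℝ. Then the matrix with rows indexed by Fin I₁ × Fin I₂, columns indexed by Fin I₃ × Fin I₄, and entry at ((i₁,i₂),(i₃,i₄)) equal to X (i₁,i₂,i₃,i₄), has rank at most min(R₁, R₃ * R₄). -/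
section FlexTucker

open Function
open scoped Kronecker

variable {R ι₁ ι₂ ι₃ ι₄ ρ₁ ρ₃ ρ₄ : Type*} [Fintype ρ₁] [Fintype ρ₃] [Fintype ρ₄]

theorem rank_mul_mul_le_min_card {m n k l : Type*} [Fintype n] [Fintype k] [Fintype l]
    [CommSemiring R] [StrongRankCondition R]
    (L : Matrix m k R) (M : Matrix k l R) (N : Matrix l n R) :
    (L * (M * N)).rank ≤ min (Fintype.card k) (Fintype.card l) := by
  refine le_min ?_ ?_
  · exact (L.rank_mul_le_left (M * N)).trans L.rank_le_card_width
  · calc (L * (M * N)).rank ≤ (M * N).rank := L.rank_mul_le_right (M * N)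
      _ ≤ N.rank := M.rank_mul_le_right N
      _ ≤ Fintype.card l := N.rank_le_card_height

theorem flexTucker_spatial_unfolding_eq_mul [NonUnitalSemiring R]
    (X : ι₁ × ι₂ × ι₃ × ι₄ → R) (V : ι₁ → ι₂ → ρ₁ → R) (G : ρ₁ → ρ₃ → ρ₄ → R)
    (B : ι₃ → ρ₃ → R) (C : ι₄ → ρ₄ → R)
    (hX : ∀ i₁ i₂ i₃ i₄, X (i₁, i₂, i₃, i₄) =
      ∑ s, ∑ r₃, ∑ r₄, V i₁ i₂ s * G s r₃ r₄ * B i₃ r₃ * C i₄ r₄) :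
    (Matrix.of fun (p : ι₁ × ι₂) (q : ι₃ × ι₄) => X (p.1, p.2, q.1, q.2)) =
      Matrix.of (uncurry V) *
        (Matrix.of (fun s => uncurry (G s)) * (Matrix.of B ⊗ₖ Matrix.of C).transpose) := by
  ext ⟨i₁, i₂⟩ ⟨i₃, i₄⟩
  simp only [Matrix.of_apply, Matrix.mul_apply, Matrix.transpose_apply, Matrix.kronecker_apply,
    uncurry_apply_pair, hX, Fintype.sum_prod_type, Finset.mul_sum, mul_assoc]

theorem flexTucker_spatial_unfolding_rank_le_general [Fintype ι₃] [Fintype ι₄]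
    [CommSemiring R] [StrongRankCondition R]
    (X : ι₁ × ι₂ × ι₃ × ι₄ → R) (V : ι₁ → ι₂ → ρ₁ → R) (G : ρ₁ → ρ₃ → ρ₄ → R)
    (B : ι₃ → ρ₃ → R) (C : ι₄ → ρ₄ → R)
    (hX : ∀ i₁ i₂ i₃ i₄, X (i₁, i₂, i₃, i₄) =
      ∑ s, ∑ r₃, ∑ r₄, V i₁ i₂ s * G s r₃ r₄ * B i₃ r₃ * C i₄ r₄) :
    (Matrix.of fun (p : ι₁ × ι₂) (q : ι₃ × ι₄) => X (p.1, p.2, q.1, q.2)).rank ≤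
      min (Fintype.card ρ₁) (Fintype.card ρ₃ * Fintype.card ρ₄) := by
  rw [flexTucker_spatial_unfolding_eq_mul X V G B C hX, ← Fintype.card_prod]
  exact rank_mul_mul_le_min_card _ _ _

end FlexTucker

/-- Flex-Tucker decomposition: the unfolding separating modes `{1,2}` from
modes `{3,4}` has matrix rank at most `min R₁ (R₃ * R₄)`. -/
theorem flexTucker_spatial_unfolding_rank_le
    (I₁ I₂ I₃ I₄ R₁ R₃ R₄ : ℕ)
    (hI₁ : 0 < I₁) (hI₂ : 0 < I₂) (hI₃ : 0 < I₃) (hI₄ : 0 < I₄)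
    (hR₁ : 0 < R₁) (hR₃ : 0 < R₃) (hR₄ : 0 < R₄)
    (X : Fin I₁ × Fin I₂ × Fin I₃ × Fin I₄ → ℝ)
    (V : Fin I₁ → Fin I₂ → Fin R₁ → ℝ)
    (G : Fin R₁ → Fin R₃ → Fin R₄ → ℝ)
    (B : Fin I₃ → Fin R₃ → ℝ)
    (C : Fin I₄ → Fin R₄ → ℝ)
    (hX : ∀ (i₁ : Fin I₁) (i₂ : Fin I₂) (i₃ : Fin I₃) (i₄ : Fin I₄),
      X (i₁, i₂, i₃, i₄) = ∑ s : Fin R₁, ∑ r₃ : Fin R₃, ∑ r₄ : Fin R₄,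
        V i₁ i₂ s * G s r₃ r₄ * B i₃ r₃ * C i₄ r₄) :
    (Matrix.of fun (p : Fin I₁ × Fin I₂) (q : Fin I₃ × Fin I₄) =>
        X (p.1, p.2, q.1, q.2)).rank ≤ min R₁ (R₃ * R₄) := by
  simpa only [Fintype.card_fin] using
    flexTucker_spatial_unfolding_rank_le_general X V G B C hX
end
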